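/- Assume (H₁) and (H₂) hold and L < 1, where L := (2·l_K²/η_G²)(l_G·√(4l_G²+2η_G²) + 2l_G² + η_G²), and set κ := 2·l_G·(√(l_G²+η_G²/2)+l_G)²/(η_G²·√(l_G²+η_G²/2)). Let x ∈ C(I,H₁) and let u : I → Ω be the map whose value u(s) is the unique solution of PQVI(s, x(s)). Then ‖u(s₂) − u(s₁)‖² ≤ (κ/(1−L))·(|s₂−s₁| + ‖x(s₂)−x(s₁)‖)² for all s₁, s₂ ∈ I; in particular, u is continuous on I. -/

import Mathlib

/-!
Write `F s v = G s (x s) v` and `a = |s₂ - s₁| + ‖x s₂ - x s₁‖`. The obstruction is that `u s₁` and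
`u s₂` lie in different constraint sets, while pseudomonotonicity only compares points of one set.
So `u s₁`, a fixed point of `v ↦ P_{K(u s₁)}[v - ρ F s₁ v]`, is transported to `K (u s₂)`: with
`ϖ = u s₁ - ρ F s₁ (u s₁)` put `w = P_{K(u s₂)}[ϖ]`. Then `‖w - u s₁‖ ≤ lK ‖u s₂ - u s₁‖`, and strong
pseudomonotonicity on `K (u s₂)`, combined with the variational inequality for `w`, gives
`‖w - u s₂‖ ≤ (lG/ηG) a + (lG/ηG + 1/(ρ ηG)) ‖w - u s₁‖` (`transport_estimate`).
By the triangle inequality `d = ‖u s₂ - u s₁‖` satisfies `d ≤ r a + C lK d` with `r = lG/ηG` and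
`C = 1 + r + 1/(ρ ηG)`. The choice `ρ = 8/ηG` makes `C` small enough for a weighted Young inequality
to turn this into `d² ≤ κ a² + L d²` (`weighted_young`); in normalised form, with
`S = √(r² + 1/2)`, the constants are `L = 4 S (S + r) lK²` and `κ = 2 r (S + r)² / S`.
-/

open scoped RealInnerProductSpace
open Set

/-- Metric projection onto a set `C` of a real Hilbert space, characterized by the
variational inequality `⟪w - x, v - w⟫ ≥ 0` for all `v ∈ C`. -/
noncomputable def proj {H : Type*} [NormedAddCommGroup H] [InnerProductSpace ℝ H]
    (C : Set H) (x : H) : H :=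
  letI : Nonempty H := ⟨0⟩
  Classical.epsilon fun w => w ∈ C ∧ ∀ v ∈ C, 0 ≤ ⟪w - x, v - w⟫

/-- The constant `L = (2 l_K²/η_G²)(l_G √(4l_G²+2η_G²) + 2l_G² + η_G²)`. -/
noncomputable def Lconst (lK lG ηG : ℝ) : ℝ :=
  2 * lK ^ 2 / ηG ^ 2 * (lG * Real.sqrt (4 * lG ^ 2 + 2 * ηG ^ 2) + 2 * lG ^ 2 + ηG ^ 2)

/-- The constant `κ = 2 l_G (√(l_G²+η_G²/2)+l_G)² / (η_G² √(l_G²+η_G²/2))`. -/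
noncomputable def kconst (lG ηG : ℝ) : ℝ :=
  2 * lG * (Real.sqrt (lG ^ 2 + ηG ^ 2 / 2) + lG) ^ 2 /
    (ηG ^ 2 * Real.sqrt (lG ^ 2 + ηG ^ 2 / 2))

/-- On a nonempty closed convex set the `epsilon` in `proj` does pick the projection. -/
lemma proj_spec {H : Type*} [NormedAddCommGroup H] [InnerProductSpace ℝ H] [CompleteSpace H]
    {C : Set H} (hne : C.Nonempty) (hcl : IsClosed C) (hcv : Convex ℝ C) (x : H) :
    proj C x ∈ C ∧ ∀ v ∈ C, 0 ≤ ⟪proj C x - x, v - proj C x⟫ := by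
  have hex : ∃ w, w ∈ C ∧ ∀ v ∈ C, 0 ≤ ⟪w - x, v - w⟫ := by
    obtain ⟨w, hw, h⟩ := exists_norm_eq_iInf_of_complete_convex hne hcl.isComplete hcv x
    refine ⟨w, hw, fun v hv => ?_⟩
    have h1 := (norm_eq_iInf_iff_real_inner_le_zero hcv hw).1 h v hv
    rw [← neg_sub x w, inner_neg_left]
    linarith
  exact Classical.epsilon_spec hex

lemma proj_eq {H : Type*} [NormedAddCommGroup H] [InnerProductSpace ℝ H] [CompleteSpace H]
    {C : Set H} (hne : C.Nonempty) (hcl : IsClosed C) (hcv : Convex ℝ C) (x w : H)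
    (hw : w ∈ C) (h : ∀ v ∈ C, 0 ≤ ⟪w - x, v - w⟫) : proj C x = w := by
  obtain ⟨hp, h2⟩ := proj_spec hne hcl hcv x
  have h3 := h _ hp
  have h4 := h2 _ hw
  set p := proj C x
  have h5 : ⟪w - x, p - w⟫ + ⟪p - x, w - p⟫ = -⟪p - w, p - w⟫ := by
    rw [← neg_sub p w, inner_neg_right, ← sub_eq_add_neg, ← inner_sub_left, ← inner_neg_left]
    congr 1
    abel
  rw [real_inner_self_eq_norm_sq] at h5
  have h6 : ‖p - w‖ ^ 2 = 0 := le_antisymm (by linarith) (sq_nonneg _)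
  exact sub_eq_zero.1 (norm_eq_zero.1 (pow_eq_zero_iff two_ne_zero |>.1 h6))

/-- Distance from `w`, the projection of `p - ρ f`, to a solution `q`: here `g` is the value of the
operator at `w`, `hg` is strong pseudomonotonicity and `hw` the variational inequality for `w`
tested at `q`. -/
lemma transport_estimate {H : Type*} [NormedAddCommGroup H] [InnerProductSpace ℝ H]
    (p q w f g : H) (ρ η l a : ℝ) (hρ : 0 < ρ)
    (hg : η * ‖w - q‖ ^ 2 ≤ ⟪g, w - q⟫)
    (hw : 0 ≤ ⟪w - (p - ρ • f), q - w⟫)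
    (hfg : ‖g - f‖ ≤ l * (a + ‖w - p‖))
    (hpos : 0 ≤ l * (a + ‖w - p‖)) :
    ρ * η * ‖w - q‖ ≤ ρ * l * a + (ρ * l + 1) * ‖w - p‖ := by
  have e : ⟪w - (p - ρ • f), q - w⟫
      = ρ * ⟪g - f, w - q⟫ - ⟪w - p, w - q⟫ - ρ * ⟪g, w - q⟫ := by
    rw [← neg_sub w q, inner_neg_right]
    have : w - (p - ρ • f) = (w - p) + ρ • f := by abel
    rw [this, inner_add_left, inner_smul_left, inner_sub_left g f]
    simp only [conj_trivial]
    ring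
  have c1 : ⟪g - f, w - q⟫ ≤ l * (a + ‖w - p‖) * ‖w - q‖ :=
    (real_inner_le_norm _ _).trans (by gcongr)
  have c2 : -⟪w - p, w - q⟫ ≤ ‖w - p‖ * ‖w - q‖ :=
    (neg_le_abs _).trans (abs_real_inner_le_norm _ _)
  have c3 := mul_le_mul_of_nonneg_left c1 hρ.le
  have c4 := mul_le_mul_of_nonneg_left hg hρ.le
  rcases (norm_nonneg (w - q)).eq_or_lt with h0 | h0
  · rw [← h0]
    have := mul_nonneg hρ.le hpos
    have := norm_nonneg (w - p)
    linarith
  · refine le_of_mul_le_mul_right ?_ h0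
    linarith

/-- Weighted Young inequality with the weights that produce the constants `κ` and `L`. -/
lemma weighted_young (r S a t κ d : ℝ) (hr : 0 < r) (hS : 0 < S) (hS2 : S ^ 2 = r ^ 2 + 1 / 2)
    (hκ : κ * S = 2 * r * (S + r) ^ 2) (hd : 0 ≤ d)
    (h : d ≤ r * a + (9 / 8 + r) * t) :
    d ^ 2 ≤ κ * a ^ 2 + 4 * S * (S + r) * t ^ 2 := by
  have hsq : d ^ 2 ≤ (r * a + (9 / 8 + r) * t) ^ 2 := pow_le_pow_left₀ hd h 2
  obtain ⟨P, hP⟩ : ∃ P, P = 4 * S * (S + r) - (9 / 8 + r) ^ 2 := ⟨_, rfl⟩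
  have hP4 : 4 * r * S < P := by
    rw [hP]; nlinarith [sq_nonneg (r - 3 / 8)]
  have hrS : 0 < r * S := mul_pos hr hS
  have hP0 : 0 < P := by linarith
  have hSr : 0 < S + r := by linarith
  -- the discriminant condition for the quadratic form in `(a, t)`
  have key : 0 ≤ κ * P - r ^ 2 * (4 * S * (S + r)) := by
    have h1 : 0 ≤ (S + r) * P - 2 * r * S ^ 2 := by
      nlinarith [mul_lt_mul_of_pos_left hP4 hSr, mul_pos hrS hS, mul_pos hrS hr]
    have h2 : S * (κ * P - r ^ 2 * (4 * S * (S + r)))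
        = 2 * r * (S + r) * ((S + r) * P - 2 * r * S ^ 2) := by
      linear_combination P * hκ
    have h3 : 0 ≤ S * (κ * P - r ^ 2 * (4 * S * (S + r))) := by
      rw [h2]; positivity
    exact nonneg_of_mul_nonneg_right h3 hS
  have h4 : 0 ≤ P * (κ * a ^ 2 + 4 * S * (S + r) * t ^ 2 - (r * a + (9 / 8 + r) * t) ^ 2) := by
    have : P * (κ * a ^ 2 + 4 * S * (S + r) * t ^ 2 - (r * a + (9 / 8 + r) * t) ^ 2)
        = (P * t - r * (9 / 8 + r) * a) ^ 2
          + (κ * P - r ^ 2 * (4 * S * (S + r))) * a ^ 2 := by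
      rw [hP]; ring
    rw [this]; positivity
  have := nonneg_of_mul_nonneg_right h4 hP0
  linarith

/-- Lemma 3.2 (Steps 1–2): Hölder-type estimate and continuity of the solution map of the
time-dependent parameterized quasi-variational inequality. -/
theorem pqvi_solution_continuity
    {H₁ H₂ : Type*} [NormedAddCommGroup H₁] [InnerProductSpace ℝ H₁] [CompleteSpace H₁]
    [NormedAddCommGroup H₂] [InnerProductSpace ℝ H₂] [CompleteSpace H₂]
    (T : ℝ) (hT : 0 < T) (q : ℝ) (hq : q ∈ Ioc (0:ℝ) 1)
    (Ω : Set H₂) (hΩne : Ω.Nonempty) (hΩcl : IsClosed Ω) (hΩcv : Convex ℝ Ω)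
    (K : H₂ → Set H₂)
    (hK : ∀ u ∈ Ω, (K u).Nonempty ∧ IsClosed (K u) ∧ Convex ℝ (K u) ∧ K u ⊆ Ω)
    (G : ℝ → H₁ → H₂ → H₂) (lG ηG : ℝ) (hlG : 0 < lG) (hηG : 0 < ηG)
    (hGLip : ∀ s₁ ∈ Icc (0:ℝ) T, ∀ s₂ ∈ Icc (0:ℝ) T, ∀ (x₁ x₂ : H₁), ∀ u₁ ∈ Ω, ∀ u₂ ∈ Ω,
      ‖G s₂ x₂ u₂ - G s₁ x₁ u₁‖ ≤ lG * (|s₂ - s₁| + ‖x₂ - x₁‖ + ‖u₂ - u₁‖))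
    (hGpm : ∀ s ∈ Icc (0:ℝ) T, ∀ (x : H₁), ∀ u ∈ Ω, ∀ u₁ ∈ K u, ∀ u₂ ∈ K u,
      0 ≤ ⟪G s x u₂, u₁ - u₂⟫ → ηG * ‖u₁ - u₂‖ ^ 2 ≤ ⟪G s x u₁, u₁ - u₂⟫)
    (lK : ℝ) (hlK : 0 ≤ lK)
    (hKproj : ∀ u₁ ∈ Ω, ∀ u₂ ∈ Ω, ∀ ϖ : H₂,
      ‖proj (K u₂) ϖ - proj (K u₁) ϖ‖ ≤ lK * ‖u₂ - u₁‖)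
    (hL : Lconst lK lG ηG < 1)
    -- `x ∈ C(I, H₁)` and `u(s)` solves PQVI(s, x(s)) for every `s ∈ I`
    (x : ℝ → H₁) (hx : ContinuousOn x (Icc 0 T))
    (u : ℝ → H₂) (hu : ∀ s ∈ Icc (0:ℝ) T, u s ∈ Ω ∧ u s ∈ K (u s) ∧
      ∀ v ∈ K (u s), 0 ≤ ⟪G s (x s) (u s), v - u s⟫) :
    (∀ s₁ ∈ Icc (0:ℝ) T, ∀ s₂ ∈ Icc (0:ℝ) T,
      ‖u s₂ - u s₁‖ ^ 2 ≤ kconst lG ηG / (1 - Lconst lK lG ηG) *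
        (|s₂ - s₁| + ‖x s₂ - x s₁‖) ^ 2) ∧
    ContinuousOn u (Icc 0 T) := by
  -- normalise by `r = lG / ηG` and `S = √(r² + 1/2)`, known only through `S² = r² + 1/2` below
  have hS0 : 0 < Real.sqrt ((lG / ηG) ^ 2 + 1 / 2) := Real.sqrt_pos.2 (by positivity)
  have hS2 : Real.sqrt ((lG / ηG) ^ 2 + 1 / 2) ^ 2 = (lG / ηG) ^ 2 + 1 / 2 :=
    Real.sq_sqrt (by positivity)
  have hr : 0 < lG / ηG := by positivity
  have hlr : lG = ηG * (lG / ηG) := by field_simp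
  generalize hrd : lG / ηG = r at *
  generalize Real.sqrt (r ^ 2 + 1 / 2) = S at *
  have e1 : Real.sqrt (lG ^ 2 + ηG ^ 2 / 2) = ηG * S := by
    rw [Real.sqrt_eq_iff_mul_self_eq (by positivity) (by positivity), hlr]
    linear_combination (-ηG ^ 2) * hS2
  have e2 : Real.sqrt (4 * lG ^ 2 + 2 * ηG ^ 2) = 2 * ηG * S := by
    rw [Real.sqrt_eq_iff_mul_self_eq (by positivity) (by positivity), hlr]
    linear_combination (-4 * ηG ^ 2) * hS2
  have eL : Lconst lK lG ηG = 4 * S * (S + r) * lK ^ 2 := by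
    unfold Lconst
    rw [e2, hlr]
    field_simp
    linear_combination (-4 * lK ^ 2) * hS2
  have eκ : kconst lG ηG * S = 2 * r * (S + r) ^ 2 := by
    unfold kconst
    rw [e1, hlr]
    field_simp
  have hκ0 : 0 ≤ kconst lG ηG := by
    unfold kconst; positivity
  have main : ∀ s₁ ∈ Icc (0:ℝ) T, ∀ s₂ ∈ Icc (0:ℝ) T,
      ‖u s₂ - u s₁‖ ^ 2 ≤ kconst lG ηG / (1 - Lconst lK lG ηG) *
        (|s₂ - s₁| + ‖x s₂ - x s₁‖) ^ 2 := by
    intro s₁ h₁ s₂ h₂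
    obtain ⟨hu1, hu1K, hv1⟩ := hu s₁ h₁
    obtain ⟨hu2, hu2K, hv2⟩ := hu s₂ h₂
    obtain ⟨n1, c1, v1, -⟩ := hK _ hu1
    obtain ⟨n2, c2, v2, sub2⟩ := hK _ hu2
    have hρ : 0 < 8 / ηG := by positivity
    generalize hρd : 8 / ηG = ρ at hρ
    have hρη : ρ * ηG = 8 := by rw [← hρd]; field_simp
    have hρl : ρ * lG = 8 * r := by rw [hlr, ← mul_assoc, hρη]
    -- a solution of the variational inequality is a fixed point of the projected step
    have hp1 : proj (K (u s₁)) (u s₁ - ρ • G s₁ (x s₁) (u s₁)) = u s₁ := by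
      refine proj_eq n1 c1 v1 _ _ hu1K fun v hv => ?_
      rw [sub_sub_cancel, inner_smul_left]
      exact mul_nonneg hρ.le (hv1 v hv)
    have hk := hKproj _ hu1 _ hu2 (u s₁ - ρ • G s₁ (x s₁) (u s₁))
    obtain ⟨hwK, hw⟩ := proj_spec n2 c2 v2 (u s₁ - ρ • G s₁ (x s₁) (u s₁))
    rw [hp1] at hk
    generalize proj (K (u s₂)) (u s₁ - ρ • G s₁ (x s₁) (u s₁)) = w at *
    have est := transport_estimate (u s₁) (u s₂) w (G s₁ (x s₁) (u s₁)) (G s₂ (x s₂) w) ρ ηG lG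
      (|s₂ - s₁| + ‖x s₂ - x s₁‖) hρ
      (hGpm s₂ h₂ (x s₂) _ hu2 w hwK _ hu2K (hv2 w hwK)) (hw _ hu2K)
      (hGLip s₁ h₁ s₂ h₂ _ _ _ hu1 _ (sub2 hwK)) (by positivity)
    have tri : ‖u s₂ - u s₁‖ ≤ ‖w - u s₂‖ + ‖w - u s₁‖ := by
      rw [norm_sub_rev w (u s₂)]
      exact norm_sub_le_norm_sub_add_norm_sub _ _ _
    rw [hρη, hρl] at est
    have hd : ‖u s₂ - u s₁‖ ≤ r * (|s₂ - s₁| + ‖x s₂ - x s₁‖)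
        + (9 / 8 + r) * (lK * ‖u s₂ - u s₁‖) := by
      have := mul_le_mul_of_nonneg_left hk (show 0 ≤ 9 / 8 + r by positivity)
      linarith
    have fin := weighted_young r S _ _ _ _ hr hS0 hS2 eκ (norm_nonneg _) hd
    rw [div_mul_eq_mul_div, le_div_iff₀ (by linarith), eL]
    linarith
  refine ⟨main, fun s hs => ?_⟩
  have hc : 0 ≤ kconst lG ηG / (1 - Lconst lK lG ηG) := div_nonneg hκ0 (by linarith)
  rw [ContinuousWithinAt, tendsto_iff_norm_sub_tendsto_zero]
  have hlim : Filter.Tendsto (fun y => Real.sqrt (kconst lG ηG / (1 - Lconst lK lG ηG)) *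
      (|y - s| + ‖x y - x s‖)) (nhdsWithin s (Icc 0 T)) (nhds 0) := by
    have hcx : ContinuousWithinAt (fun y => Real.sqrt (kconst lG ηG / (1 - Lconst lK lG ηG)) *
        (|y - s| + ‖x y - x s‖)) (Icc 0 T) s := by
      have := hx s hs
      fun_prop
    simpa [ContinuousWithinAt] using hcx
  refine squeeze_zero' (Filter.Eventually.of_forall fun _ => norm_nonneg _) ?_ hlim
  filter_upwards [self_mem_nhdsWithin] with y hy
  refine (sq_le_sq₀ (norm_nonneg _) (by positivity)).1 ?_
  rw [mul_pow, Real.sq_sqrt hc]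
  exact main s hs y hy
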